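/- Let n ≥ 1, let φ be a nonsingular elliptic quadratic form on V = F^{2n+2} with elliptic quadric Q = Q^−(2n+1,q), and let Σ be the set of all hyperplanes of PG(2n+1,q) containing exactly (q^{2n}−1)/(q−1) points of Q. Then: (1) every point of Q is contained in exactly q^n(q^n+1) hyperplanes of Σ and every point of PG(2n+1,q) not in Q is contained in exactly q^{2n} hyperplanes of Σ; (2) every subspace of codimension 2 of PG(2n+1,q) is contained in exactly 0, q−1, q, or q+1 hyperplanes of Σ. -/

import Mathlib

/-!
For a nondegenerate form `φ` on a space of dimension `d + 1` over a field with `q` elements, the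
numbers `N c` of solutions of `φ v = c` satisfy `∑ N c = q ^ (d + 1)`, and their second moment is
determined as well, because for `a ≠ 0` the equation `φ (y + a) = φ y` is affine in `y`. If
`N 0 = q ^ d - (q - 1) * s` with `q * s ^ 2 = q ^ d`, these two moments force `N c = q ^ d + s` for
all `c ≠ 0`. An elliptic form has such an `N 0`, with `s = q ^ n`: split off hyperbolic planes until
an anisotropic plane remains.

Counting the pairs `(t, z)` with `t * φ z + polar φ x z = 0` in two ways then gives the number of
points of the quadric in the hyperplane `x^⊥`, and shows that `x^⊥` belongs to `Σ` exactly when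
`φ x ≠ 0`. So the members of `Σ` through `W` correspond to the points off the quadric in `W^⊥`. For
a point `W` this is a hyperplane section again; if `W` has codimension 2, then `W^⊥` is a line,
which meets the quadric in `0`, `1`, `2` or `q + 1` points.
-/

open LinearMap.BilinForm (orthogonal)
open Module (finrank)
open QuadraticMap (polar)

section Counting

theorem natCard_subtype_eq_sum {α : Type*} [Fintype α] (p : α → Prop) [DecidablePred p] :
    Nat.card {a // p a} = ∑ a, if p a then 1 else 0 := by
  rw [Nat.card_eq_fintype_card, Fintype.card_subtype, Finset.card_filter]

theorem natCard_and_add_natCard_and_not {α : Type*} [Finite α] (p r : α → Prop) :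
    Nat.card {a // p a ∧ r a} + Nat.card {a // p a ∧ ¬r a} = Nat.card {a // p a} :=
  Set.ncard_inter_add_ncard_sdiff_eq_ncard {a | p a} {a | r a}

theorem sum_natCard_comm {α β : Type*} [Fintype α] [Fintype β] (r : α → β → Prop) :
    ∑ a, Nat.card {b // r a b} = ∑ b, Nat.card {a // r a b} := by
  classical
  simp only [natCard_subtype_eq_sum]
  exact Finset.sum_comm

theorem natCard_subtype_prod {α β : Type*} [Fintype α] [Finite β] (p : α × β → Prop) :
    Nat.card {x // p x} = ∑ a, Nat.card {b // p (a, b)} := by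
  rw [Nat.card_congr (Equiv.subtypeProdEquivSigmaSubtype fun a b => p (a, b)), Nat.card_sigma]

theorem eq_pow_sub_one_div_iff {q : ℕ} (hq : 1 < q) (N m : ℕ) :
    N = (q ^ m - 1) / (q - 1) ↔ (N : ℤ) * (q - 1) = (q : ℤ) ^ m - 1 := by
  have one_le_pow : 1 ≤ q ^ m := Nat.one_le_pow _ _ (by omega)
  rw [Nat.eq_div_iff_mul_eq_left (by omega) (Nat.sub_one_dvd_pow_sub_one _ _)]
  zify [hq.le, one_le_pow]
  exact eq_comm

theorem sum_ite_eq_add_card_sub_one_mul {α : Type*} [Fintype α] [DecidableEq α] (a₀ : α)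
    (x y : ℤ) : ∑ a, (if a = a₀ then x else y) = x + ((Fintype.card α : ℤ) - 1) * y := by
  have split : ∀ a, (if a = a₀ then x else y) = (if a = a₀ then x - y else 0) + y := by
    intro a
    split_ifs <;> ring
  simp only [split, Finset.sum_add_distrib, Finset.sum_ite_eq', Finset.mem_univ, if_true,
    Finset.sum_const, Finset.card_univ, nsmul_eq_mul]
  ring

variable {F V : Type*} [Field F] [Fintype F] [AddCommGroup V] [Module F V]

theorem natCard_mul_add_eq_zero [DecidableEq F] (a b : F) :
    Nat.card {t // a * t + b = 0} =
      if a = 0 then (if b = 0 then Fintype.card F else 0) else 1 := by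
  split_ifs with ha hb
  · simp [ha, hb]
  · simp [ha, hb]
  · have root_unique : ∀ t, a * t + b = 0 ↔ t = -b / a := by
      intro t
      rw [eq_div_iff ha, eq_neg_iff_add_eq_zero, mul_comm]
    simp [root_unique]

theorem natCard_mul_add_eq_zero_prod [DecidableEq F] (b : F) :
    (Nat.card {y : F × F // y.1 * y.2 + b = 0} : ℤ) =
      (if b = 0 then (Fintype.card F : ℤ) else 0) + (Fintype.card F - 1) := by
  rw [natCard_subtype_prod]
  simp only [natCard_mul_add_eq_zero]
  push_cast
  rw [sum_ite_eq_add_card_sub_one_mul, mul_one]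

theorem natCard_dual_fiber [Module.Finite F V] {d : ℕ} (hd : finrank F V = d + 1)
    {l : Module.Dual F V} (hl : l ≠ 0) (a : F) :
    Nat.card {v // l v = a} = Fintype.card F ^ d := by
  obtain ⟨w, rfl⟩ := LinearMap.surjective hl a
  have hker : finrank F l.ker = d := by
    have := Module.Dual.finrank_ker_add_one_of_ne_zero hl
    omega
  rw [← hker, ← Nat.card_eq_fintype_card, ← Module.natCard_eq_pow_finrank]
  refine Nat.card_congr ((Equiv.subRight w).subtypeEquiv fun v => ?_)
  simp [sub_eq_zero]

end Counting

section LevelSets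

variable {F V : Type*} [Field F] [AddCommGroup V] [Module F V]

/-- The number of vectors at which the quadratic form `φ` takes the value `c` (the zero vector
included, for `c = 0`). -/
noncomputable def levelCard (φ : QuadraticForm F V) (c : F) : ℕ :=
  Nat.card {v // φ v = c}

theorem polarBilin_isRefl (φ : QuadraticForm F V) : φ.polarBilin.IsRefl := fun x y hxy => by
  rwa [QuadraticMap.polarBilin_apply_apply, QuadraticMap.polar_comm]

theorem polarBilin_nondegenerate_iff {φ : QuadraticForm F V} :
    φ.polarBilin.Nondegenerate ↔ ∀ x, (∀ y, polar φ x y = 0) → x = 0 :=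
  (polarBilin_isRefl φ).nondegenerate_iff_separatingLeft

theorem polarBilin_ne_zero {φ : QuadraticForm F V} (hφ : φ.polarBilin.Nondegenerate) {x : V}
    (hx : x ≠ 0) : φ.polarBilin x ≠ 0 :=
  fun h => hx (hφ.1 x fun y => by rw [h, LinearMap.zero_apply])

theorem levelCard_zero_of_anisotropic {φ : QuadraticForm F V} (hφ : φ.Anisotropic) :
    levelCard φ 0 = 1 := by
  simp [levelCard, hφ.eq_zero_iff]

variable [Fintype F]

theorem sum_levelCard_mul [Fintype V] (φ : QuadraticForm F V) (g : F → ℤ) :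
    ∑ c, levelCard φ c * g c = ∑ v, g (φ v) := by
  classical
  rw [← Finset.sum_fiberwise Finset.univ φ]
  refine Finset.sum_congr rfl fun c _ => ?_
  rw [Finset.sum_congr rfl (g := fun _ => g c) (by simp +contextual), Finset.sum_const,
    nsmul_eq_mul, levelCard, Nat.card_eq_fintype_card, Fintype.card_subtype]

variable [Module.Finite F V]

theorem sum_levelCard (φ : QuadraticForm F V) :
    ∑ c, (levelCard φ c : ℤ) = (Fintype.card F : ℤ) ^ finrank F V := by
  have := Module.finite_of_finite F (M := V)
  have := Fintype.ofFinite V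
  have count := sum_levelCard_mul φ fun _ => 1
  simp only [mul_one, Finset.sum_const, Finset.card_univ, nsmul_eq_mul] at count
  rw [count, Module.card_eq_pow_finrank (K := F), Nat.cast_pow]

theorem sum_levelCard_sq {φ : QuadraticForm F V} (hφ : φ.polarBilin.Nondegenerate) {d : ℕ}
    (hd : finrank F V = d + 1) :
    ∑ c, (levelCard φ c : ℤ) ^ 2 = (Fintype.card F : ℤ) ^ (d + 1) +
      ((Fintype.card F : ℤ) ^ (d + 1) - 1) * (Fintype.card F : ℤ) ^ d := by
  classical
  have := Module.finite_of_finite F (M := V)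
  have := Fintype.ofFinite V
  have translate : ∀ y, levelCard φ (φ y) = Nat.card {a // φ (y + a) = φ y} := fun y =>
    (Nat.card_congr ((Equiv.addLeft y).subtypeEquiv fun _ => Iff.rfl)).symm
  have level_of_ne : ∀ a ≠ 0, Nat.card {y // φ (y + a) = φ y} = Fintype.card F ^ d := by
    intro a ha
    rw [← natCard_dual_fiber hd (polarBilin_ne_zero hφ ha) (-φ a)]
    refine Nat.card_congr (Equiv.subtypeEquivRight fun y => ?_)
    rw [QuadraticMap.map_add φ, QuadraticMap.polarBilin_apply_apply, QuadraticMap.polar_comm φ a,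
      add_assoc, add_eq_left, eq_neg_iff_add_eq_zero, add_comm]
  have card_V : Fintype.card V = Fintype.card F ^ (d + 1) := by
    rw [Module.card_eq_pow_finrank (K := F), hd]
  calc ∑ c, (levelCard φ c : ℤ) ^ 2
      = ∑ y, (levelCard φ (φ y) : ℤ) := by
        simp only [sq, sum_levelCard_mul]
    _ = ∑ a, (Nat.card {y // φ (y + a) = φ y} : ℤ) := by
        simp only [translate]
        exact_mod_cast sum_natCard_comm fun y a => φ (y + a) = φ y
    _ = ∑ a : V, if a = 0 then (Fintype.card F : ℤ) ^ (d + 1) else (Fintype.card F : ℤ) ^ d := by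
        refine Finset.sum_congr rfl fun a _ => ?_
        split_ifs with ha
        · simp [ha, card_V]
        · rw [level_of_ne a ha, Nat.cast_pow]
    _ = _ := by
        rw [sum_ite_eq_add_card_sub_one_mul, card_V, Nat.cast_pow]

theorem sum_levelCard_sub_sq {φ : QuadraticForm F V} (hφ : φ.polarBilin.Nondegenerate) {d : ℕ}
    (hd : finrank F V = d + 1) (s : ℤ) :
    ∑ c, ((levelCard φ c : ℤ) - (Fintype.card F : ℤ) ^ d - s) ^ 2 =
      (Fintype.card F : ℤ) ^ (d + 1) - (Fintype.card F : ℤ) ^ d + Fintype.card F * s ^ 2 := by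
  have expand : ∀ c, ((levelCard φ c : ℤ) - (Fintype.card F : ℤ) ^ d - s) ^ 2 =
      (levelCard φ c : ℤ) ^ 2 - 2 * ((Fintype.card F : ℤ) ^ d + s) * levelCard φ c +
        ((Fintype.card F : ℤ) ^ d + s) ^ 2 := fun c => by ring
  simp only [expand, Finset.sum_add_distrib, Finset.sum_sub_distrib, ← Finset.mul_sum,
    sum_levelCard, sum_levelCard_sq hφ hd, hd, Finset.sum_const, Finset.card_univ, nsmul_eq_mul]
  ring

/-- The shift by `s` is chosen so that the term at `0` of the shifted second moment is already the
whole sum. -/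
theorem levelCard_eq_of_ne_zero {φ : QuadraticForm F V} (hφ : φ.polarBilin.Nondegenerate) {d : ℕ}
    (hd : finrank F V = d + 1) {s : ℤ} (hs : Fintype.card F * s ^ 2 = (Fintype.card F : ℤ) ^ d)
    (h0 : levelCard φ 0 = (Fintype.card F : ℤ) ^ d - (Fintype.card F - 1) * s) {c : F}
    (hc : c ≠ 0) : (levelCard φ c : ℤ) = (Fintype.card F : ℤ) ^ d + s := by
  classical
  have variance := sum_levelCard_sub_sq hφ hd s
  rw [← Finset.add_sum_erase _ _ (Finset.mem_univ 0), h0, pow_succ _ d, ← hs] at variance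
  have rest_eq_zero : ∑ b ∈ Finset.univ.erase 0,
      ((levelCard φ b : ℤ) - Fintype.card F * s ^ 2 - s) ^ 2 = 0 := by
    linear_combination variance
  have term_eq_zero := (Finset.sum_eq_zero_iff_of_nonneg fun _ _ => sq_nonneg _).1 rest_eq_zero c
    (by simpa using hc)
  rw [← hs]
  linear_combination pow_eq_zero_iff two_ne_zero |>.1 term_eq_zero

end LevelSets

theorem not_anisotropic_of_two_lt_finrank {F V : Type*} [Field F] [Finite F] [AddCommGroup V]
    [Module F V] [Module.Finite F V] {φ : QuadraticForm F V}
    (hφ : φ.polarBilin.Nondegenerate) (hd : 2 < finrank F V) : ¬φ.Anisotropic := by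
  have := Fintype.ofFinite F
  intro haniso
  obtain ⟨d, hd'⟩ : ∃ d, finrank F V = d + 1 := ⟨finrank F V - 1, by omega⟩
  have hq : (1 : ℤ) < Fintype.card F := mod_cast Fintype.one_lt_card
  have hpow : (Fintype.card F : ℤ) ^ 2 ≤ (Fintype.card F : ℤ) ^ d :=
    pow_le_pow_right₀ hq.le (by omega)
  have zero_term := Finset.single_le_sum (fun c _ => sq_nonneg _) (Finset.mem_univ (0 : F))
    |>.trans_eq (sum_levelCard_sub_sq hφ hd' 0)
  rw [levelCard_zero_of_anisotropic haniso, pow_succ _ d] at zero_term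
  push_cast at zero_term
  nlinarith

section Orthogonal

variable {F V : Type*} [Field F] [AddCommGroup V] [Module F V] (φ : QuadraticForm F V)

theorem mem_orthogonal_span_singleton {x v : V} :
    v ∈ orthogonal φ.polarBilin (F ∙ x) ↔ polar φ x v = 0 := by
  rw [LinearMap.BilinForm.orthogonal_span_singleton_eq_toLin_ker]
  exact LinearMap.mem_ker

theorem levelCard_restrict (U : Submodule F V) (c : F) :
    levelCard (φ.restrict U) c = Nat.card {v // v ∈ U ∧ φ v = c} :=
  Nat.card_congr (Equiv.subtypeSubtypeEquivSubtypeInter (· ∈ U) fun v => φ v = c)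

variable {φ}

theorem natCard_mul_add_polar_eq_zero (x : V) {t : F} (ht : t ≠ 0) :
    Nat.card {z // φ z * t + polar φ x z = 0} = levelCard φ (φ x) := by
  let shift : V ≃ V := (LinearEquiv.smulOfNeZero F V t ht).toEquiv.trans (Equiv.addLeft x)
  refine Nat.card_congr (shift.subtypeEquiv fun z => ?_)
  have map_shift : φ (shift z) = φ x + t * (φ z * t + polar φ x z) := by
    change φ (x + t • z) = _
    rw [QuadraticMap.map_add φ, QuadraticMap.map_smul, QuadraticMap.polar_smul_right, smul_eq_mul,
      smul_eq_mul]
    ring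
  rw [map_shift, add_eq_left, mul_eq_zero, or_iff_right ht]

variable [Fintype F] [Module.Finite F V]

theorem sum_natCard_mul_add_polar_eq_zero (x : V) :
    (∑ t : F, Nat.card {z // φ z * t + polar φ x z = 0} : ℤ) + levelCard φ 0 =
      (Fintype.card F : ℤ) ^ finrank F V +
        Fintype.card F * levelCard (φ.restrict (orthogonal φ.polarBilin (F ∙ x))) 0 := by
  classical
  have := Module.finite_of_finite F (M := V)
  have := Fintype.ofFinite V
  have card_V : (Fintype.card F : ℤ) ^ finrank F V = ∑ _z : V, 1 := by
    simp [← Nat.cast_pow, ← Module.card_eq_pow_finrank]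
  have swap := sum_natCard_comm fun (t : F) (z : V) => φ z * t + polar φ x z = 0
  zify at swap
  simp only [natCard_mul_add_eq_zero] at swap
  rw [swap, card_V, levelCard_restrict, levelCard, natCard_subtype_eq_sum, natCard_subtype_eq_sum]
  push_cast
  rw [Finset.mul_sum, ← Finset.sum_add_distrib, ← Finset.sum_add_distrib]
  refine Finset.sum_congr rfl fun z _ => ?_
  rw [mem_orthogonal_span_singleton]
  by_cases hz : φ z = 0 <;> by_cases hxz : polar φ x z = 0 <;> simp [hz, hxz, add_comm]

/-- Count the pairs `(t, z)` with `t * φ z + polar φ x z = 0`: for fixed `t ≠ 0` they are the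
vectors `x + t • z` on the same level set as `x`. -/
theorem levelCard_restrict_orthogonal_span_singleton (hφ : φ.polarBilin.Nondegenerate) {d : ℕ}
    (hd : finrank F V = d + 1) {x : V} (hx : x ≠ 0) :
    (Fintype.card F : ℤ) ^ (d + 1) +
        Fintype.card F * levelCard (φ.restrict (orthogonal φ.polarBilin (F ∙ x))) 0 =
      (Fintype.card F : ℤ) ^ d + (Fintype.card F - 1) * levelCard φ (φ x) + levelCard φ 0 := by
  classical
  have fiber : ∀ t : F, (Nat.card {z // φ z * t + polar φ x z = 0} : ℤ) =
      if t = 0 then (Fintype.card F : ℤ) ^ d else levelCard φ (φ x) := by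
    intro t
    split_ifs with ht
    · subst ht
      simpa using congrArg (Nat.cast (R := ℤ))
        (natCard_dual_fiber hd (polarBilin_ne_zero hφ hx) 0)
    · rw [natCard_mul_add_polar_eq_zero x ht]
  rw [← hd, ← sum_natCard_mul_add_polar_eq_zero]
  simp only [fiber, sum_ite_eq_add_card_sub_one_mul]

variable {m : ℕ} {s : ℤ}

theorem levelCard_restrict_orthogonal_of_map_eq_zero (hφ : φ.polarBilin.Nondegenerate)
    (hd : finrank F V = m + 2)
    (h0 : levelCard φ 0 = (Fintype.card F : ℤ) ^ (m + 1) - (Fintype.card F - 1) * s)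
    {x : V} (hx : x ≠ 0) (hφx : φ x = 0) :
    (levelCard (φ.restrict (orthogonal φ.polarBilin (F ∙ x))) 0 : ℤ) =
      (Fintype.card F : ℤ) ^ m - (Fintype.card F - 1) * s := by
  have relation := levelCard_restrict_orthogonal_span_singleton hφ hd hx
  rw [hφx, h0] at relation
  have hq : (Fintype.card F : ℤ) ≠ 0 := mod_cast Fintype.card_ne_zero
  refine mul_left_cancel₀ hq ?_
  linear_combination relation

theorem levelCard_restrict_orthogonal_of_map_ne_zero (hφ : φ.polarBilin.Nondegenerate)
    (hd : finrank F V = m + 2) (hs : s ^ 2 = (Fintype.card F : ℤ) ^ m)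
    (h0 : levelCard φ 0 = (Fintype.card F : ℤ) ^ (m + 1) - (Fintype.card F - 1) * s)
    {x : V} (hφx : φ x ≠ 0) :
    (levelCard (φ.restrict (orthogonal φ.polarBilin (F ∙ x))) 0 : ℤ) =
      (Fintype.card F : ℤ) ^ m := by
  have hx : x ≠ 0 := by
    rintro rfl
    exact hφx φ.map_zero
  have relation := levelCard_restrict_orthogonal_span_singleton hφ hd hx
  rw [levelCard_eq_of_ne_zero hφ hd (by rw [hs, pow_succ']) h0 hφx, h0] at relation
  have hq : (Fintype.card F : ℤ) ≠ 0 := mod_cast Fintype.card_ne_zero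
  refine mul_left_cancel₀ hq ?_
  linear_combination relation

end Orthogonal

section HyperbolicPair

variable {F V : Type*} [Field F] [AddCommGroup V] [Module F V]

/-- `e` and `f` are isotropic vectors with `polar φ e f = 1`, the standard basis of a hyperbolic
plane. -/
structure IsHyperbolicPair (φ : QuadraticForm F V) (e f : V) : Prop where
  map_left : φ e = 0
  map_right : φ f = 0
  polar_eq_one : polar φ e f = 1

variable {φ : QuadraticForm F V}

theorem exists_isHyperbolicPair (hφ : φ.polarBilin.Nondegenerate) {e : V} (he : e ≠ 0)
    (hφe : φ e = 0) : ∃ f, IsHyperbolicPair φ e f := by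
  obtain ⟨g, hg⟩ := LinearMap.surjective (polarBilin_ne_zero hφ he) 1
  rw [QuadraticMap.polarBilin_apply_apply] at hg
  refine ⟨g - φ g • e, hφe, ?_, ?_⟩
  · rw [sub_eq_neg_add, ← neg_smul, QuadraticMap.map_add φ, QuadraticMap.map_smul,
      QuadraticMap.polar_smul_left, hφe, hg]
    simp
  · simp [QuadraticMap.polar_sub_right, QuadraticMap.polar_smul_right, QuadraticMap.polar_self,
      hφe, hg]

variable (φ) in
/-- The orthogonal complement of the span of `e` and `f`. -/
def pairOrthogonal (e f : V) : Submodule F V :=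
  orthogonal φ.polarBilin (F ∙ e) ⊓ orthogonal φ.polarBilin (F ∙ f)

theorem mem_pairOrthogonal {e f v : V} :
    v ∈ pairOrthogonal φ e f ↔ polar φ e v = 0 ∧ polar φ f v = 0 := by
  rw [pairOrthogonal, Submodule.mem_inf, mem_orthogonal_span_singleton,
    mem_orthogonal_span_singleton]

namespace IsHyperbolicPair

variable {e f : V}

theorem polar_left (h : IsHyperbolicPair φ e f) (a b : F) (u : pairOrthogonal φ e f) :
    polar φ e (a • e + b • f + u) = b := by
  simp [QuadraticMap.polar_add_right, QuadraticMap.polar_smul_right, QuadraticMap.polar_self,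
    h.map_left, h.polar_eq_one, (mem_pairOrthogonal.1 u.2).1]

theorem polar_right (h : IsHyperbolicPair φ e f) (a b : F) (u : pairOrthogonal φ e f) :
    polar φ f (a • e + b • f + u) = a := by
  simp [QuadraticMap.polar_add_right, QuadraticMap.polar_smul_right, QuadraticMap.polar_self,
    h.map_right, QuadraticMap.polar_comm φ f e, h.polar_eq_one, (mem_pairOrthogonal.1 u.2).2]

theorem map_smul_add_smul_add (h : IsHyperbolicPair φ e f) (a b : F)
    (u : pairOrthogonal φ e f) :
    φ (a • e + b • f + u) = a * b + φ.restrict (pairOrthogonal φ e f) u := by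
  have orthogonal_left := (mem_pairOrthogonal.1 u.2).1
  have orthogonal_right := (mem_pairOrthogonal.1 u.2).2
  simp [QuadraticMap.map_add φ, QuadraticMap.map_smul, QuadraticMap.polar_add_left,
    QuadraticMap.polar_smul_left, QuadraticMap.polar_smul_right, h.map_left, h.map_right,
    h.polar_eq_one, orthogonal_left, orthogonal_right, mul_comm]

theorem sub_mem_pairOrthogonal (h : IsHyperbolicPair φ e f) (v : V) :
    v - (polar φ f v • e + polar φ e v • f) ∈ pairOrthogonal φ e f := by
  have left := h.polar_left (polar φ f v) (polar φ e v) 0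
  have right := h.polar_right (polar φ f v) (polar φ e v) 0
  rw [ZeroMemClass.coe_zero, add_zero] at left right
  rw [mem_pairOrthogonal, QuadraticMap.polar_sub_right, QuadraticMap.polar_sub_right, left, right,
    sub_self, sub_self]
  exact ⟨rfl, rfl⟩

/-- The splitting of `V` into the hyperbolic plane spanned by `e` and `f` and its orthogonal
complement. -/
noncomputable def splitting (h : IsHyperbolicPair φ e f) :
    ((F × F) × pairOrthogonal φ e f) ≃ₗ[F] V where
  toFun p := p.1.1 • e + p.1.2 • f + p.2
  map_add' p p' := by
    simp only [Prod.fst_add, Prod.snd_add, Submodule.coe_add, add_smul]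
    abel
  map_smul' t p := by
    simp only [Prod.smul_fst, Prod.smul_snd, Submodule.coe_smul, smul_add, smul_eq_mul, mul_smul,
      RingHom.id_apply]
  invFun v := ((polar φ f v, polar φ e v), ⟨_, h.sub_mem_pairOrthogonal v⟩)
  left_inv p := by
    simp [h.polar_left, h.polar_right]
  right_inv v := add_sub_cancel _ _

theorem splitting_apply (h : IsHyperbolicPair φ e f) (a b : F) (u : pairOrthogonal φ e f) :
    h.splitting ((a, b), u) = a • e + b • f + u :=
  rfl

theorem nondegenerate_restrict (h : IsHyperbolicPair φ e f) (hφ : φ.polarBilin.Nondegenerate) :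
    (φ.restrict (pairOrthogonal φ e f)).polarBilin.Nondegenerate := by
  refine polarBilin_nondegenerate_iff.2 fun u hu => Subtype.ext (hφ.1 u fun v => ?_)
  obtain ⟨⟨⟨a, b⟩, w⟩, rfl⟩ := h.splitting.surjective v
  have orthogonal_left := (mem_pairOrthogonal.1 u.2).1
  have orthogonal_right := (mem_pairOrthogonal.1 u.2).2
  have orthogonal_rest : polar φ u w = 0 := hu w
  simp [splitting_apply, QuadraticMap.polar_add_right, QuadraticMap.polar_smul_right,
    QuadraticMap.polar_comm φ u e, QuadraticMap.polar_comm φ u f, orthogonal_left,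
    orthogonal_right, orthogonal_rest]

theorem finrank_eq [Module.Finite F V] (h : IsHyperbolicPair φ e f) :
    finrank F V = finrank F (pairOrthogonal φ e f) + 2 := by
  rw [← h.splitting.finrank_eq, Module.finrank_prod, Module.finrank_prod, Module.finrank_self,
    add_comm]

theorem levelCard_eq [Fintype F] [Module.Finite F V] (h : IsHyperbolicPair φ e f) (c : F) :
    (levelCard φ c : ℤ) = Fintype.card F * levelCard (φ.restrict (pairOrthogonal φ e f)) c +
      (Fintype.card F - 1) * (Fintype.card F : ℤ) ^ finrank F (pairOrthogonal φ e f) := by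
  classical
  have := Module.finite_of_finite F (M := V)
  let ψ := φ.restrict (pairOrthogonal φ e f)
  have := Fintype.ofFinite (pairOrthogonal φ e f)
  let coordinates := (Equiv.prodComm _ _).trans h.splitting.toEquiv
  have coordinates_iff : ∀ p, p.2.1 * p.2.2 + (ψ p.1 - c) = 0 ↔ φ (coordinates p) = c := by
    intro p
    change _ ↔ φ (h.splitting ((p.2.1, p.2.2), p.1)) = c
    rw [splitting_apply, h.map_smul_add_smul_add, ← add_sub_assoc, sub_eq_zero]
  have level_eq : levelCard φ c =
      Nat.card {p : pairOrthogonal φ e f × F × F // p.2.1 * p.2.2 + (ψ p.1 - c) = 0} :=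
    (Nat.card_congr (coordinates.subtypeEquiv coordinates_iff)).symm
  have card_complement : (Fintype.card (pairOrthogonal φ e f) : ℤ) =
      (Fintype.card F : ℤ) ^ finrank F (pairOrthogonal φ e f) := by
    rw [Module.card_eq_pow_finrank (K := F), Nat.cast_pow]
  have natCard_level : levelCard ψ c = ∑ u, if ψ u - c = 0 then 1 else 0 := by
    simp only [levelCard, natCard_subtype_eq_sum, sub_eq_zero]
  rw [level_eq, natCard_subtype_prod, natCard_level, ← card_complement]
  push_cast
  simp only [natCard_mul_add_eq_zero_prod, Finset.sum_add_distrib, Finset.mul_sum, mul_ite,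
    mul_one, mul_zero, Finset.sum_const, Finset.card_univ, nsmul_eq_mul]
  ring

end IsHyperbolicPair
end HyperbolicPair

section Elliptic

variable {F V : Type*} [Field F] [AddCommGroup V] [Module F V]

/-- A subspace on which the quadratic form vanishes identically. -/
def IsTotallySingular (φ : QuadraticForm F V) (W : Submodule F V) : Prop :=
  ∀ v ∈ W, φ v = 0

/-- A nondegenerate elliptic quadratic form in `2 * n + 2` variables, so that its quadric is
`Q⁻(2n+1, q)` when `F` has `q` elements. -/
structure IsElliptic (φ : QuadraticForm F V) (n : ℕ) : Prop where
  nondegenerate : φ.polarBilin.Nondegenerate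
  finrank_eq : finrank F V = 2 * n + 2
  finrank_ne : ∀ W, IsTotallySingular φ W → finrank F W ≠ n + 1

variable {φ : QuadraticForm F V} {n : ℕ}

theorem isTotallySingular_span_singleton {x : V} :
    IsTotallySingular φ (F ∙ x) ↔ φ x = 0 := by
  refine ⟨fun h => h x (Submodule.mem_span_singleton_self x), fun h v hv => ?_⟩
  obtain ⟨a, rfl⟩ := Submodule.mem_span_singleton.1 hv
  rw [QuadraticMap.map_smul, h, smul_zero]

theorem IsElliptic.moduleFinite (hφ : IsElliptic φ n) : Module.Finite F V :=
  Module.finite_of_finrank_pos (by simp [hφ.finrank_eq])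

theorem IsElliptic.restrict_pairOrthogonal (hφ : IsElliptic φ (n + 1))
    {e f : V} (h : IsHyperbolicPair φ e f) :
    IsElliptic (φ.restrict (pairOrthogonal φ e f)) n where
  nondegenerate := h.nondegenerate_restrict hφ.nondegenerate
  finrank_eq := by
    have := hφ.moduleFinite
    have := hφ.finrank_eq
    have := h.finrank_eq
    omega
  finrank_ne W hW hWd := by
    have := hφ.moduleFinite
    let W' := W.map (pairOrthogonal φ e f).subtype
    have e_notMem : e ∉ W' := by
      rintro ⟨u, -, hu⟩
      have polar_eq_zero := (mem_pairOrthogonal.1 u.2).2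
      rw [← Submodule.subtype_apply, hu, QuadraticMap.polar_comm, h.polar_eq_one] at polar_eq_zero
      exact one_ne_zero polar_eq_zero
    refine hφ.finrank_ne (W' ⊔ F ∙ e) ?_ ?_
    · intro v hv
      obtain ⟨_, ⟨u, hu, rfl⟩, y, hy, rfl⟩ := Submodule.mem_sup.1 hv
      obtain ⟨a, rfl⟩ := Submodule.mem_span_singleton.1 hy
      have value := h.map_smul_add_smul_add a 0 u
      rwa [zero_smul, add_zero, mul_zero, hW u hu, add_zero, add_comm] at value
    · rw [Submodule.finrank_sup_span_singleton e_notMem, Submodule.finrank_map_subtype_eq, hWd]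

theorem IsElliptic.levelCard_zero [Fintype F] (hφ : IsElliptic φ n) :
    (levelCard φ 0 : ℤ) = (Fintype.card F : ℤ) ^ (2 * n + 1) -
      (Fintype.card F - 1) * (Fintype.card F : ℤ) ^ n := by
  induction n generalizing V with
  | zero =>
    have anisotropic : φ.Anisotropic := by
      intro x hx
      by_contra hx0
      exact hφ.finrank_ne _ (isTotallySingular_span_singleton.2 hx) (finrank_span_singleton hx0)
    rw [levelCard_zero_of_anisotropic anisotropic]
    ring
  | succ n ih =>
    have := hφ.moduleFinite
    have isotropic := not_anisotropic_of_two_lt_finrank hφ.nondegenerate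
      (by have := hφ.finrank_eq; omega)
    obtain ⟨e, he, hφe⟩ := (QuadraticMap.not_anisotropic_iff_exists φ).1 isotropic
    obtain ⟨f, hef⟩ := exists_isHyperbolicPair hφ.nondegenerate he hφe
    have rest := hφ.restrict_pairOrthogonal hef
    rw [hef.levelCard_eq, ih rest, rest.finrank_eq]
    ring

end Elliptic

section Points

variable {F V : Type*} [Field F] [AddCommGroup V] [Module F V]

/-- The points of the quadric of `φ` in the subspace `U`. -/
def singularPoints (φ : QuadraticForm F V) (U : Submodule F V) : Set (Submodule F V) :=
  {p | finrank F p = 1 ∧ p ≤ U ∧ IsTotallySingular φ p}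

/-- The points off the quadric of `φ` in the subspace `U`. -/
def nonsingularPoints (φ : QuadraticForm F V) (U : Submodule F V) : Set (Submodule F V) :=
  {p | finrank F p = 1 ∧ p ≤ U ∧ ¬IsTotallySingular φ p}

variable {φ : QuadraticForm F V} {U : Submodule F V} {x : V}

theorem span_singleton_mem_singularPoints (hx : x ≠ 0) :
    F ∙ x ∈ singularPoints φ U ↔ x ∈ U ∧ φ x = 0 := by
  simp [singularPoints, finrank_span_singleton hx, isTotallySingular_span_singleton]

theorem span_singleton_mem_nonsingularPoints (hx : x ≠ 0) :
    F ∙ x ∈ nonsingularPoints φ U ↔ x ∈ U ∧ φ x ≠ 0 := by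
  simp [nonsingularPoints, finrank_span_singleton hx, isTotallySingular_span_singleton]

theorem exists_eq_span_singleton_of_finrank_eq_one {p : Submodule F V} (hp : finrank F p = 1) :
    ∃ x ≠ 0, p = F ∙ x :=
  (atom_iff_nonzero_span p).1 (Submodule.isAtom_iff_finrank_eq_one.2 hp)

theorem mem_iff_eq_span_singleton {p : Submodule F V} (hp : finrank F p = 1) (hx : x ≠ 0) :
    x ∈ p ↔ p = F ∙ x := by
  have := Module.finite_of_finrank_eq_succ hp
  refine ⟨fun h => ?_, fun h => h ▸ Submodule.mem_span_singleton_self x⟩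
  refine (Submodule.eq_of_le_of_finrank_eq ?_ ?_).symm
  · rwa [Submodule.span_singleton_le_iff_mem]
  · rw [hp, finrank_span_singleton hx]

theorem natCard_subtype_mem_and_ne_zero {P : Set (Submodule F V)}
    (hP : ∀ p ∈ P, finrank F p = 1) [Decidable (x ≠ 0 ∧ F ∙ x ∈ P)] :
    Nat.card {p : P // x ∈ p.1 ∧ x ≠ 0} = if x ≠ 0 ∧ F ∙ x ∈ P then 1 else 0 := by
  by_cases hx : x = 0
  · simp [hx]
  have through_iff : ∀ p : P, x ∈ p.1 ∧ x ≠ 0 ↔ p.1 = F ∙ x := fun p => by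
    rw [and_iff_left hx, mem_iff_eq_span_singleton (hP p p.2) hx]
  rw [Nat.card_congr (Equiv.subtypeEquivRight through_iff)]
  split_ifs with hxP
  · simp only [← Subtype.ext_iff (a2 := ⟨F ∙ x, hxP.2⟩), Nat.card_unique]
  · have : IsEmpty {p : P // p.1 = F ∙ x} := ⟨fun p => hxP ⟨hx, p.2 ▸ p.1.2⟩⟩
    exact Nat.card_of_isEmpty

variable [Fintype F] [Module.Finite F V]

theorem natCard_mem_and_ne_zero (U : Submodule F V) :
    (Nat.card {v // v ∈ U ∧ v ≠ 0} : ℤ) = (Fintype.card F : ℤ) ^ finrank F U - 1 := by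
  have := Module.finite_of_finite F (M := V)
  have split := natCard_and_add_natCard_and_not (· ∈ U) (· = 0)
  have zero_only : ∀ v, v ∈ U ∧ v = 0 ↔ v = 0 := by simp +contextual
  have card_U : Nat.card {v // v ∈ U} = Fintype.card F ^ finrank F U := by
    rw [Module.natCard_eq_pow_finrank (K := F), Nat.card_eq_fintype_card]
  simp only [zero_only, Nat.card_unique, card_U] at split
  rw [← Nat.cast_pow, ← split]
  simp

theorem ncard_mul_card_sub_one {P : Set (Submodule F V)} (hP : ∀ p ∈ P, finrank F p = 1) :
    (P.ncard : ℤ) * (Fintype.card F - 1) = Nat.card {v : V // v ≠ 0 ∧ F ∙ v ∈ P} := by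
  classical
  have := Module.finite_of_finite F (M := V)
  have := Fintype.ofFinite V
  have := Fintype.ofFinite P
  have nonzero_in_point : ∀ p : P, (Nat.card {v // v ∈ p.1 ∧ v ≠ 0} : ℤ) =
      Fintype.card F - 1 := fun p => by
    rw [natCard_mem_and_ne_zero, hP p p.2, pow_one]
  have double_count := sum_natCard_comm fun (p : P) (v : V) => v ∈ p.1 ∧ v ≠ 0
  zify at double_count
  simp only [nonzero_in_point, natCard_subtype_mem_and_ne_zero hP] at double_count
  rw [natCard_subtype_eq_sum, Nat.cast_sum, ← double_count, Finset.sum_const, Finset.card_univ,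
    nsmul_eq_mul, ← Nat.card_eq_fintype_card (α := P), Nat.card_coe_set_eq]

theorem ncard_singularPoints (φ : QuadraticForm F V) (U : Submodule F V) :
    ((singularPoints φ U).ncard : ℤ) * (Fintype.card F - 1) = levelCard (φ.restrict U) 0 - 1 := by
  have := Module.finite_of_finite F (M := V)
  have span_mem : ∀ v, v ≠ 0 ∧ F ∙ v ∈ singularPoints φ U ↔ (v ∈ U ∧ φ v = 0) ∧ v ≠ 0 := by
    intro v
    rw [and_comm, and_congr_left span_singleton_mem_singularPoints]
  have zero_only : ∀ v, (v ∈ U ∧ φ v = 0) ∧ v = 0 ↔ v = 0 := by simp +contextual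
  have split := natCard_and_add_natCard_and_not (fun v => v ∈ U ∧ φ v = 0) (· = 0)
  simp only [zero_only, Nat.card_unique] at split
  rw [ncard_mul_card_sub_one fun p hp => hp.1, levelCard_restrict, ← split]
  simp only [span_mem]
  push_cast
  ring

theorem ncard_nonsingularPoints (φ : QuadraticForm F V) (U : Submodule F V) :
    ((nonsingularPoints φ U).ncard : ℤ) * (Fintype.card F - 1) =
      (Fintype.card F : ℤ) ^ finrank F U - levelCard (φ.restrict U) 0 := by
  have := Module.finite_of_finite F (M := V)
  have span_mem : ∀ v, v ≠ 0 ∧ F ∙ v ∈ nonsingularPoints φ U ↔ v ∈ U ∧ ¬φ v = 0 := by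
    intro v
    by_cases hv : v = 0
    · simp [hv]
    · simp [hv, span_singleton_mem_nonsingularPoints hv]
  have card_U : (Nat.card {v // v ∈ U} : ℤ) = (Fintype.card F : ℤ) ^ finrank F U := by
    rw [Module.natCard_eq_pow_finrank (K := F), Nat.card_eq_fintype_card, Nat.cast_pow]
  have split := natCard_and_add_natCard_and_not (· ∈ U) (φ · = 0)
  rw [ncard_mul_card_sub_one fun p hp => hp.1, ← card_U, levelCard_restrict, ← split]
  simp only [span_mem]
  push_cast
  ring

end Points

section Line

variable {F V : Type*} [Field F] [AddCommGroup V] [Module F V]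

theorem exists_linearEquiv_prod (hV : finrank F V = 2) {e : V} (he : e ≠ 0) :
    ∃ (f : V) (L : (F × F) ≃ₗ[F] V), ∀ t s, L (t, s) = s • e + t • f := by
  have := Module.finite_of_finrank_eq_succ hV
  obtain ⟨f, hef⟩ := exists_linearIndependent_pair_of_one_lt_finrank (R := F) (by omega) he
  let L := (LinearMap.toSpanSingleton F V f).coprod (LinearMap.toSpanSingleton F V e)
  have L_apply : ∀ p, L p = p.2 • e + p.1 • f := fun p => by
    simp [L, LinearMap.toSpanSingleton_apply, add_comm]
  have injective : Function.Injective L := by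
    refine (injective_iff_map_eq_zero L).2 fun p hp => ?_
    obtain ⟨hs, ht⟩ := LinearIndependent.pair_iff.1 hef _ _ ((L_apply p).symm.trans hp)
    exact Prod.ext ht hs
  exact ⟨f, L.linearEquivOfInjective injective (by simp [hV]), fun t s => L_apply (t, s)⟩

variable [Fintype F]

theorem levelCard_zero_of_finrank_eq_two (hV : finrank F V = 2) (φ : QuadraticForm F V) :
    ∃ k ∈ ({-1, 0, 1, (Fintype.card F : ℤ)} : Set ℤ),
      (levelCard φ 0 : ℤ) = Fintype.card F + (Fintype.card F - 1) * k := by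
  classical
  have := Module.finite_of_finrank_eq_succ hV
  by_cases haniso : φ.Anisotropic
  · exact ⟨-1, by simp, by simp [levelCard_zero_of_anisotropic haniso]⟩
  obtain ⟨e, he, hφe⟩ := (QuadraticMap.not_anisotropic_iff_exists φ).1 haniso
  obtain ⟨f, L, hL⟩ := exists_linearEquiv_prod hV he
  have map_L : ∀ t s, t * polar φ e f * s + t * t * φ f = 0 ↔ φ (L (t, s)) = 0 := by
    intro t s
    rw [hL, QuadraticMap.map_add φ, QuadraticMap.map_smul, QuadraticMap.map_smul, hφe,
      QuadraticMap.polar_smul_left, QuadraticMap.polar_smul_right]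
    simp only [smul_eq_mul]
    ring_nf
  have level_eq : levelCard φ 0 =
      Nat.card {p : F × F // p.1 * polar φ e f * p.2 + p.1 * p.1 * φ f = 0} :=
    (Nat.card_congr (L.toEquiv.subtypeEquiv fun p => map_L p.1 p.2)).symm
  let k : ℤ := if polar φ e f = 0 then (if φ f = 0 then Fintype.card F else 0) else 1
  have fiber : ∀ t : F, (Nat.card {s // t * polar φ e f * s + t * t * φ f = 0} : ℤ) =
      if t = 0 then (Fintype.card F : ℤ) else k := by
    intro t
    rw [natCard_mul_add_eq_zero]
    by_cases ht : t = 0 <;> simp [ht, k]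
  refine ⟨k, ?_, ?_⟩
  · simp only [k]
    split_ifs <;> simp
  · rw [level_eq, natCard_subtype_prod]
    push_cast
    simp only [fiber, sum_ite_eq_add_card_sub_one_mul]

theorem ncard_nonsingularPoints_of_finrank_eq_two [Module.Finite F V] (φ : QuadraticForm F V)
    {L : Submodule F V} (hL : finrank F L = 2) :
    (nonsingularPoints φ L).ncard ∈
      ({0, Fintype.card F - 1, Fintype.card F, Fintype.card F + 1} : Set ℕ) := by
  have one_lt_card : (1 : ℤ) < Fintype.card F := mod_cast Fintype.one_lt_card
  obtain ⟨k, hk, level_eq⟩ := levelCard_zero_of_finrank_eq_two hL (φ.restrict L)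
  have count := ncard_nonsingularPoints φ L
  rw [hL, level_eq] at count
  have ncard_eq : ((nonsingularPoints φ L).ncard : ℤ) = Fintype.card F - k := by
    refine mul_right_cancel₀ (sub_ne_zero.2 one_lt_card.ne') ?_
    linear_combination count
  simp only [Set.mem_insert_iff, Set.mem_singleton_iff] at hk ⊢
  omega

end Line

section Polarity

variable {F V : Type*} [Field F] [AddCommGroup V] [Module F V]
  {φ : QuadraticForm F V} {n : ℕ}

theorem le_orthogonal_comm {U W : Submodule F V} :
    U ≤ orthogonal φ.polarBilin W ↔ W ≤ orthogonal φ.polarBilin U := by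
  have swap : ∀ {U W : Submodule F V}, U ≤ orthogonal φ.polarBilin W →
      W ≤ orthogonal φ.polarBilin U := fun h =>
    (LinearMap.BilinForm.le_orthogonal_orthogonal (polarBilin_isRefl φ)).trans
      (LinearMap.BilinForm.orthogonal_le h)
  exact ⟨swap, swap⟩

namespace IsElliptic

theorem orthogonal_orthogonal (hφ : IsElliptic φ n) (W : Submodule F V) :
    orthogonal φ.polarBilin (orthogonal φ.polarBilin W) = W :=
  have := hφ.moduleFinite
  LinearMap.BilinForm.orthogonal_orthogonal hφ.nondegenerate (polarBilin_isRefl φ) W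

theorem finrank_orthogonal (hφ : IsElliptic φ n) (W : Submodule F V) :
    finrank F (orthogonal φ.polarBilin W) = 2 * n + 2 - finrank F W := by
  have := hφ.moduleFinite
  rw [LinearMap.BilinForm.finrank_orthogonal hφ.nondegenerate, hφ.finrank_eq]

end IsElliptic

variable [Fintype F]

/-- The hyperplanes of a `2 * n + 2`-dimensional space that meet the quadric of `φ` in as many
points as a parabolic quadric `Q(2n, q)` has. -/
def parabolicHyperplanes (φ : QuadraticForm F V) (n : ℕ) : Set (Submodule F V) :=
  {π | finrank F π = 2 * n + 1 ∧
    (singularPoints φ π).ncard = (Fintype.card F ^ (2 * n) - 1) / (Fintype.card F - 1)}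

namespace IsElliptic

theorem levelCard_orthogonal_of_map_eq_zero (hφ : IsElliptic φ n) {x : V} (hx : x ≠ 0)
    (hφx : φ x = 0) :
    (levelCard (φ.restrict (orthogonal φ.polarBilin (F ∙ x))) 0 : ℤ) =
      (Fintype.card F : ℤ) ^ (2 * n) - (Fintype.card F - 1) * (Fintype.card F : ℤ) ^ n :=
  have := hφ.moduleFinite
  levelCard_restrict_orthogonal_of_map_eq_zero hφ.nondegenerate hφ.finrank_eq hφ.levelCard_zero
    hx hφx

theorem levelCard_orthogonal_of_map_ne_zero (hφ : IsElliptic φ n) {x : V} (hφx : φ x ≠ 0) :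
    (levelCard (φ.restrict (orthogonal φ.polarBilin (F ∙ x))) 0 : ℤ) =
      (Fintype.card F : ℤ) ^ (2 * n) :=
  have := hφ.moduleFinite
  levelCard_restrict_orthogonal_of_map_ne_zero hφ.nondegenerate hφ.finrank_eq
    (by rw [← pow_mul, mul_comm]) hφ.levelCard_zero hφx

theorem orthogonal_mem_parabolicHyperplanes (hφ : IsElliptic φ n) {x : V} (hx : x ≠ 0) :
    orthogonal φ.polarBilin (F ∙ x) ∈ parabolicHyperplanes φ n ↔ φ x ≠ 0 := by
  have := hφ.moduleFinite
  have one_lt_card : (1 : ℤ) < Fintype.card F := mod_cast Fintype.one_lt_card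
  have hyperplane : finrank F (orthogonal φ.polarBilin (F ∙ x)) = 2 * n + 1 := by
    rw [hφ.finrank_orthogonal, finrank_span_singleton hx]
    omega
  rw [parabolicHyperplanes, Set.mem_ofPred_eq, and_iff_right hyperplane,
    eq_pow_sub_one_div_iff Fintype.one_lt_card, ncard_singularPoints]
  by_cases hφx : φ x = 0
  · have gap_pos : 0 < ((Fintype.card F : ℤ) - 1) * (Fintype.card F : ℤ) ^ n :=
      mul_pos (sub_pos.2 one_lt_card) (by positivity)
    rw [hφ.levelCard_orthogonal_of_map_eq_zero hx hφx]
    refine iff_of_false (fun h => ?_) (not_not_intro hφx)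
    linarith
  · rw [hφ.levelCard_orthogonal_of_map_ne_zero hφx]
    exact iff_of_true rfl hφx

theorem setOf_parabolicHyperplanes_ge (hφ : IsElliptic φ n) (W : Submodule F V) :
    {π ∈ parabolicHyperplanes φ n | W ≤ π} =
      orthogonal φ.polarBilin '' nonsingularPoints φ (orthogonal φ.polarBilin W) := by
  have := hφ.moduleFinite
  ext π
  constructor
  · rintro ⟨hπ, hWπ⟩
    have finrank_pole : finrank F (orthogonal φ.polarBilin π) = 1 := by
      rw [hφ.finrank_orthogonal, hπ.1]
      omega
    obtain ⟨x, hx, hxπ⟩ := exists_eq_span_singleton_of_finrank_eq_one finrank_pole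
    refine ⟨F ∙ x, ?_, ?_⟩
    · have x_mem : F ∙ x ≤ orthogonal φ.polarBilin W :=
        hxπ.ge.trans (LinearMap.BilinForm.orthogonal_le hWπ)
      rw [← hφ.orthogonal_orthogonal π, hxπ, hφ.orthogonal_mem_parabolicHyperplanes hx] at hπ
      rw [Submodule.span_singleton_le_iff_mem] at x_mem
      exact (span_singleton_mem_nonsingularPoints hx).2 ⟨x_mem, hπ⟩
    · rw [← hxπ, hφ.orthogonal_orthogonal]
  · rintro ⟨p, hp, rfl⟩
    obtain ⟨x, hx, rfl⟩ := exists_eq_span_singleton_of_finrank_eq_one hp.1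
    have hx' := (span_singleton_mem_nonsingularPoints hx).1 hp
    exact ⟨(hφ.orthogonal_mem_parabolicHyperplanes hx).2 hx'.2, le_orthogonal_comm.1 hp.2.1⟩

theorem ncard_parabolicHyperplanes_ge (hφ : IsElliptic φ n) (W : Submodule F V) :
    {π ∈ parabolicHyperplanes φ n | W ≤ π}.ncard =
      (nonsingularPoints φ (orthogonal φ.polarBilin W)).ncard := by
  rw [hφ.setOf_parabolicHyperplanes_ge]
  exact Set.ncard_image_of_injective _ (Function.LeftInverse.injective hφ.orthogonal_orthogonal)

theorem ncard_parabolicHyperplanes_ge_span_singleton (hφ : IsElliptic φ n) {x : V} (hx : x ≠ 0) :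
    ({π ∈ parabolicHyperplanes φ n | F ∙ x ≤ π}.ncard : ℤ) * (Fintype.card F - 1) =
      (Fintype.card F : ℤ) ^ (2 * n + 1) -
        levelCard (φ.restrict (orthogonal φ.polarBilin (F ∙ x))) 0 := by
  have := hφ.moduleFinite
  rw [hφ.ncard_parabolicHyperplanes_ge, ncard_nonsingularPoints, hφ.finrank_orthogonal,
    finrank_span_singleton hx]
  rfl

end IsElliptic

end Polarity

theorem stmt_5_general {F V : Type*} [Field F] [Fintype F] [AddCommGroup V] [Module F V]
    {φ : QuadraticForm F V} {n : ℕ} (hφ : IsElliptic φ n) :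
    (∀ p : Submodule F V, finrank F p = 1 →
      (IsTotallySingular φ p → {π ∈ parabolicHyperplanes φ n | p ≤ π}.ncard =
        Fintype.card F ^ n * (Fintype.card F ^ n + 1)) ∧
      (¬IsTotallySingular φ p →
        {π ∈ parabolicHyperplanes φ n | p ≤ π}.ncard = Fintype.card F ^ (2 * n))) ∧
    (∀ W : Submodule F V, finrank F W = 2 * n → {π ∈ parabolicHyperplanes φ n | W ≤ π}.ncard ∈
      ({0, Fintype.card F - 1, Fintype.card F, Fintype.card F + 1} : Set ℕ)) := by
  have := hφ.moduleFinite
  have one_lt_card : (1 : ℤ) < Fintype.card F := mod_cast Fintype.one_lt_card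
  refine ⟨fun p hp => ?_, fun W hW => ?_⟩
  · obtain ⟨x, hx, rfl⟩ := exists_eq_span_singleton_of_finrank_eq_one hp
    have count := hφ.ncard_parabolicHyperplanes_ge_span_singleton hx
    rw [isTotallySingular_span_singleton]
    refine ⟨fun hφx => ?_, fun hφx => ?_⟩ <;> zify <;>
      refine mul_right_cancel₀ (sub_ne_zero.2 one_lt_card.ne') ?_
    · rw [count, hφ.levelCard_orthogonal_of_map_eq_zero hx hφx]
      ring
    · rw [count, hφ.levelCard_orthogonal_of_map_ne_zero hφx]
      ring
  · rw [hφ.ncard_parabolicHyperplanes_ge]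
    refine ncard_nonsingularPoints_of_finrank_eq_two φ ?_
    rw [hφ.finrank_orthogonal, hW]
    omega

/-- For `n ≥ 1` and a nonsingular elliptic quadratic form `φ` on `F^{2n+2}` with
quadric `Q`, the family `S` of parabolic hyperplanes satisfies: (1) every point of `Q` lies in
exactly `q^n(q^n+1)` members of `S` and every point off `Q` in exactly `q^{2n}`; (2) every
codimension-2 subspace lies in exactly `0`, `q-1`, `q` or `q+1` members of `S`. -/
theorem stmt_5 (n : ℕ) (hn : 1 ≤ n)
    (F : Type) [Field F] [Fintype F] (q : ℕ) (hq : Fintype.card F = q)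
    (φ : QuadraticForm F (Fin (2*n+2) → F))
    (hnonsing : ∀ x, (∀ y, φ (x + y) - φ x - φ y = 0) → x = 0)
    (helliptic : ¬ ∃ W : Submodule F (Fin (2*n+2) → F),
      Module.finrank F W = n+1 ∧ ∀ v ∈ W, φ v = 0)
    (S : Set (Submodule F (Fin (2*n+2) → F)))
    (hSdef : S = {π : Submodule F (Fin (2*n+2) → F) | Module.finrank F π = 2*n+1 ∧
      {p : Submodule F (Fin (2*n+2) → F) |
        Module.finrank F p = 1 ∧ p ≤ π ∧ ∀ v ∈ p, φ v = 0}.ncard = (q^(2*n) - 1)/(q - 1)}) :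
    (∀ p : Submodule F (Fin (2*n+2) → F), Module.finrank F p = 1 →
      ((∀ v ∈ p, φ v = 0) → {π ∈ S | p ≤ π}.ncard = q^n * (q^n + 1)) ∧
      (¬ (∀ v ∈ p, φ v = 0) → {π ∈ S | p ≤ π}.ncard = q^(2*n))) ∧
    (∀ W : Submodule F (Fin (2*n+2) → F), Module.finrank F W = 2*n →
      {π ∈ S | W ≤ π}.ncard ∈ ({0, q - 1, q, q + 1} : Set ℕ)) := by
  subst hq hSdef
  exact stmt_5_general ⟨polarBilin_nondegenerate_iff.2 hnonsing, Module.finrank_fin_fun F,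
    fun W hW hWd => helliptic ⟨W, hWd, hW⟩⟩
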